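/- Let M be an infinite matrix with no vanishing columns and p ≥ 1. The standard unit vectors e_n (with 1 in position n and 0 elsewhere) form an unconditional Schauder basis of (ℓ^p_M, ‖·‖_{M,p}). In particular, for every x ∈ ℓ^p_M the truncations x^N (setting coordinates beyond N to zero) converge to x in the norm ‖·‖_{M,p}. -/

import Mathlib

open scoped ENNReal NNReal

noncomputable def eNorm (m : ℕ → ℕ → ℂ) (p : ℝ) (x : ℕ → ℂ) : ℝ≥0∞ :=
  (∑' n : ℕ, (∑' k : ℕ, (‖m n k‖₊ : ℝ≥0∞) * (‖x k‖₊ : ℝ≥0∞)) ^ p) ^ (1 / p)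

/-- The standard unit vector `e_i`. -/
noncomputable def unitVec (i : ℕ) : ℕ → ℂ := Pi.single i 1

theorem aux_dct (F : ℕ → ℕ → ℝ≥0∞) (f b : ℕ → ℝ≥0∞) (hb : ∀ N k, F N k ≤ b k)
    (hfin : ∑' k, b k ≠ ∞)
    (hlim : ∀ k, Filter.Tendsto (fun N => F N k) Filter.atTop (nhds (f k))) :
    Filter.Tendsto (fun N => ∑' k, F N k) Filter.atTop (nhds (∑' k, f k)) := by
  simp only [← MeasureTheory.lintegral_count]
  refine MeasureTheory.tendsto_lintegral_of_dominated_convergence b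
    (fun N => Measurable.of_discrete) (fun N => Filter.Eventually.of_forall (hb N)) ?_
    (Filter.Eventually.of_forall hlim)
  rwa [MeasureTheory.lintegral_count]

theorem aux_tendsto (m : ℕ → ℕ → ℂ) (p : ℝ) (hp : 1 ≤ p)
    (x : ℕ → ℂ) (hx : eNorm m p x < ∞) (y : ℕ → ℕ → ℂ)
    (hy : ∀ N k, ‖y N k‖₊ ≤ ‖x k‖₊) (hy0 : ∀ k, ∀ᶠ N in Filter.atTop, y N k = 0) :
    Filter.Tendsto (fun N => eNorm m p (y N)) Filter.atTop (nhds 0) := by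
  have hp0 : 0 < p := by linarith
  have hq : 0 < 1 / p := by positivity
  have hS : ∑' n : ℕ, (∑' k : ℕ, (‖m n k‖₊ : ℝ≥0∞) * (‖x k‖₊ : ℝ≥0∞)) ^ p ≠ ∞ := by
    intro h
    unfold eNorm at hx
    rw [h, ENNReal.top_rpow_of_pos hq] at hx
    exact lt_irrefl _ hx
  have hin : ∀ n, ∑' k : ℕ, (‖m n k‖₊ : ℝ≥0∞) * (‖x k‖₊ : ℝ≥0∞) ≠ ∞ := by
    intro n h
    have := ENNReal.ne_top_of_tsum_ne_top hS n
    rw [h, ENNReal.top_rpow_of_pos hp0] at this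
    exact this rfl
  have hle : ∀ N n k, (‖m n k‖₊ : ℝ≥0∞) * (‖y N k‖₊ : ℝ≥0∞)
      ≤ (‖m n k‖₊ : ℝ≥0∞) * (‖x k‖₊ : ℝ≥0∞) := by
    intro N n k
    have := hy N k
    gcongr
  have h1 : ∀ n, Filter.Tendsto
      (fun N => ∑' k : ℕ, (‖m n k‖₊ : ℝ≥0∞) * (‖y N k‖₊ : ℝ≥0∞)) Filter.atTop (nhds 0) := by
    intro n
    have := aux_dct (fun N k => (‖m n k‖₊ : ℝ≥0∞) * (‖y N k‖₊ : ℝ≥0∞)) (fun _ => 0) _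
      (fun N k => hle N n k) (hin n) (by
        intro k
        refine tendsto_const_nhds.congr' ?_
        filter_upwards [hy0 k] with N hN
        simp [hN])
    simpa using this
  have h2 := aux_dct
    (fun N n => (∑' k : ℕ, (‖m n k‖₊ : ℝ≥0∞) * (‖y N k‖₊ : ℝ≥0∞)) ^ p) (fun _ => 0) _
    (fun N n => ENNReal.rpow_le_rpow (ENNReal.tsum_le_tsum (hle N n)) hp0.le) hS (by
      intro n
      have := (h1 n).ennrpow_const p
      rwa [ENNReal.zero_rpow_of_pos hp0] at this)
  have h3 := h2.ennrpow_const (1 / p)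
  simp only [tsum_zero] at h3
  rwa [ENNReal.zero_rpow_of_pos hq] at h3

theorem aux_lower (m : ℕ → ℕ → ℂ) (p : ℝ) (hp : 1 ≤ p) (y : ℕ → ℂ) (n k : ℕ) :
    (‖m n k‖₊ : ℝ≥0∞) * (‖y k‖₊ : ℝ≥0∞) ≤ eNorm m p y := by
  have hp0 : 0 < p := by linarith
  unfold eNorm
  rw [one_div, ENNReal.le_rpow_inv_iff hp0]
  refine le_trans ?_ (ENNReal.le_tsum n)
  exact ENNReal.rpow_le_rpow
    (ENNReal.le_tsum (f := fun k => (‖m n k‖₊ : ℝ≥0∞) * (‖y k‖₊ : ℝ≥0∞)) k) hp0.le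

theorem aux_sum (σ : Equiv.Perm ℕ) (a : ℕ → ℂ) (N k : ℕ) :
    (∑ j ∈ Finset.range N, a (σ j) • unitVec (σ j)) k = if σ.symm k < N then a k else 0 := by
  have : ∀ j, (a (σ j) • unitVec (σ j)) k = if σ.symm k = j then a k else 0 := by
    intro j
    by_cases h : σ.symm k = j
    · subst h
      simp [unitVec]
    · have h' : k ≠ σ j := fun e => h (by simp [e])
      simp [unitVec, h, h']
  rw [Finset.sum_apply]
  simp only [this, Finset.sum_ite_eq, Finset.mem_range]

/-- The unit vectors form an unconditional Schauder basis of `ℓ^p_M`: for every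
`x ∈ ℓ^p_M` and every permutation `σ` of `ℕ`, the partial sums
`∑_{k<N} x_{σ(k)} e_{σ(k)}` converge to `x` in the norm `‖·‖_{M,p}`; the expansion
with these coefficients is unique. In particular (taking `σ = id`) the truncations
`x^N` converge to `x`. -/
theorem stmt5 (m : ℕ → ℕ → ℂ) (p : ℝ) (hp : 1 ≤ p)
    (hcol : ∀ k : ℕ, ∃ n : ℕ, m n k ≠ 0)
    (x : ℕ → ℂ) (hx : eNorm m p x < ∞) :
    (∀ σ : Equiv.Perm ℕ,
      Filter.Tendsto
        (fun N : ℕ => eNorm m p (x - ∑ k ∈ Finset.range N, x (σ k) • unitVec (σ k)))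
        Filter.atTop (nhds 0)) ∧
    (∀ a : ℕ → ℂ,
      Filter.Tendsto (fun N : ℕ => eNorm m p (x - ∑ k ∈ Finset.range N, a k • unitVec k))
        Filter.atTop (nhds 0) → a = x) ∧
    Filter.Tendsto
      (fun N : ℕ => eNorm m p (x - fun k => if k < N then x k else 0))
      Filter.atTop (nhds 0) := by
  have key : ∀ σ : Equiv.Perm ℕ, Filter.Tendsto
        (fun N : ℕ => eNorm m p (x - ∑ k ∈ Finset.range N, x (σ k) • unitVec (σ k)))
        Filter.atTop (nhds 0) := by
    intro σ
    refine aux_tendsto m p hp x hx _ ?_ ?_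
    · intro N k
      rw [Pi.sub_apply, aux_sum]
      split_ifs <;> simp
    · intro k
      filter_upwards [Filter.eventually_gt_atTop (σ.symm k)] with N hN
      rw [Pi.sub_apply, aux_sum, if_pos hN, sub_self]
  refine ⟨key, ?_, ?_⟩
  · intro a ha
    funext k
    obtain ⟨n, hn⟩ := hcol k
    have hle : (‖m n k‖₊ : ℝ≥0∞) * (‖x k - a k‖₊ : ℝ≥0∞) ≤ 0 := by
      refine ge_of_tendsto ha ?_
      filter_upwards [Filter.eventually_gt_atTop k] with N hN
      have h := aux_lower m p hp (x - ∑ k ∈ Finset.range N, a k • unitVec k) n k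
      have hs : (∑ j ∈ Finset.range N, a j • unitVec j) k = a k :=
        (aux_sum (Equiv.refl ℕ) a N k).trans (if_pos hN)
      rwa [Pi.sub_apply, hs] at h
    have h0 : x k - a k = 0 := by
      simpa [hn] using hle
    exact (sub_eq_zero.mp h0).symm
  · refine aux_tendsto m p hp x hx _ ?_ ?_
    · intro N k
      rw [Pi.sub_apply]
      split_ifs <;> simp
    · intro k
      filter_upwards [Filter.eventually_gt_atTop k] with N hN
      rw [Pi.sub_apply, if_pos hN, sub_self]
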